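/- arXiv:1802.03632 — 4 statements merged into one kernel-verified Lean document; each statement's English description precedes it below -/
import Mathlib

section
/- Let T ≤ SU(2) be the subgroup of diagonal matrices of SU(2), i.e. matrices diag(λ, λ̄) with λ ∈ ℂ, |λ| = 1. For every g ∈ SU(2), if gTg⁻¹ ≠ T then gTg⁻¹ ∩ T = {I, −I}. In other words, any two distinct conjugates of the diagonal maximal torus of SU(2) intersect exactly in the center of SU(2). -/
/-!
An element `g` of `SU(2)` has the form `!![a, b; -conj b, conj a]` with `a * conj a + b * conj b = 1`.
If `a = 0` or `b = 0`, conjugation by `g` sends `diag(λ, conj λ)` to `diag(conj λ, λ)` or fixes it, so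
`g` normalizes `T`. Otherwise `a` and `b` are both nonzero, and the first row of `g * t = s * g`, for
`t = diag(λ, conj λ)` and `s = diag(μ, conj μ)`, gives `λ = μ = conj λ`; so `λ` is real of
modulus one, i.e. `λ = 1` or `λ = -1`.
-/

open ComplexConjugate in
/-- The normal form of a matrix in `SU(2)`, obtained by comparing the two expressions of the
inverse: the adjugate (as `det g = 1`) and the conjugate transpose (as `g` is unitary). -/
lemma exists_form_of_mem_SU2 (g : Matrix (Fin 2) (Fin 2) ℂ)
    (hg : g ∈ Matrix.specialUnitaryGroup (Fin 2) ℂ) :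
    ∃ a b : ℂ, a * conj a + b * conj b = 1 ∧ g = !![a, b; -conj b, conj a] ∧
      g⁻¹ = !![conj a, -b; conj b, a] := by
  obtain ⟨hu, hd⟩ := Matrix.mem_specialUnitaryGroup_iff.1 hg
  have h1 : g⁻¹ = star g := Matrix.inv_eq_left_inv (Matrix.mem_unitaryGroup_iff'.1 hu)
  have h2 : g⁻¹ = !![g 1 1, -g 0 1; -g 1 0, g 0 0] := by
    rw [Matrix.inv_def, hd, Matrix.adjugate_fin_two]; simp
  have h3 := h1.symm.trans h2
  have e00 : conj (g 0 0) = g 1 1 := by simpa using congrFun (congrFun h3 0) 0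
  have e10 : conj (g 0 1) = -g 1 0 := by simpa using congrFun (congrFun h3 1) 0
  have e10' : g 1 0 = -conj (g 0 1) := by rw [e10, neg_neg]
  refine ⟨g 0 0, g 0 1, ?_, ?_, ?_⟩
  · rw [Matrix.det_fin_two] at hd
    rw [e00, e10]; linear_combination hd
  · rw [e00, ← e10']; exact Matrix.eta_fin_two g
  · rw [h2, e00, e10]

/-- Let `T ≤ SU(2)` be the diagonal maximal torus, consisting of the
matrices `diag(λ, conj λ)` with `‖λ‖ = 1`.  For every `g ∈ SU(2)`, if `gTg⁻¹ ≠ T` then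
`gTg⁻¹ ∩ T = {I, -I}`: any two distinct conjugates of the diagonal maximal torus of
`SU(2)` intersect exactly in the center of `SU(2)`. -/
theorem distinct_maximal_tori_of_SU2_intersect_in_center
    (T : Set (Matrix (Fin 2) (Fin 2) ℂ))
    (hT : T = {M | ∃ lam : ℂ, ‖lam‖ = 1 ∧ M = !![lam, 0; 0, (starRingEnd ℂ) lam]})
    (g : Matrix (Fin 2) (Fin 2) ℂ)
    (hg : g ∈ Matrix.specialUnitaryGroup (Fin 2) ℂ)
    (hne : (fun t => g * t * g⁻¹) '' T ≠ T) :
    ((fun t => g * t * g⁻¹) '' T) ∩ T = ({1, -1} : Set (Matrix (Fin 2) (Fin 2) ℂ)) := by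
  obtain ⟨a, b, hab, hgf, hgi⟩ := exists_form_of_mem_SU2 g hg
  have hinv : g * g⁻¹ = 1 :=
    Matrix.mul_nonsing_inv g (by simp [(Matrix.mem_specialUnitaryGroup_iff.1 hg).2])
  have hinv' : g⁻¹ * g = 1 := mul_eq_one_comm.1 hinv
  have hb : b ≠ 0 := by
    rintro rfl
    have key : ∀ l m : ℂ, g * !![l, 0; 0, m] * g⁻¹ = !![l, 0; 0, m] := by
      intro l m
      simp only [map_zero, mul_zero, add_zero] at hab
      rw [hgi, hgf, Matrix.mul_fin_two, Matrix.mul_fin_two]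
      congr! 4 <;> simp
      · linear_combination l * hab
      · linear_combination m * hab
    apply hne
    subst hT
    ext M
    constructor
    · rintro ⟨_, ⟨l, hl, rfl⟩, rfl⟩
      exact ⟨l, hl, key _ _⟩
    · rintro ⟨l, hl, rfl⟩
      exact ⟨_, ⟨l, hl, rfl⟩, key _ _⟩
  have ha : a ≠ 0 := by
    rintro rfl
    have key : ∀ l m : ℂ, g * !![l, 0; 0, m] * g⁻¹ = !![m, 0; 0, l] := by
      intro l m
      simp only [map_zero, mul_zero, zero_add] at hab
      rw [hgi, hgf, Matrix.mul_fin_two, Matrix.mul_fin_two]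
      congr! 4 <;> simp
      · linear_combination m * hab
      · linear_combination l * hab
    apply hne
    subst hT
    ext M
    constructor
    · rintro ⟨_, ⟨l, hl, rfl⟩, rfl⟩
      exact ⟨(starRingEnd ℂ) l, by simpa using hl, by simpa using key _ _⟩
    · rintro ⟨l, hl, rfl⟩
      exact ⟨_, ⟨(starRingEnd ℂ) l, by simpa using hl, rfl⟩, by simpa using key _ _⟩
  have h1T : (1 : Matrix (Fin 2) (Fin 2) ℂ) ∈ T := by
    rw [hT]; exact ⟨1, by simp, by simp [Matrix.one_fin_two]⟩
  have hm1T : (-1 : Matrix (Fin 2) (Fin 2) ℂ) ∈ T := by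
    rw [hT]; exact ⟨-1, by simp, by simp [Matrix.one_fin_two]⟩
  ext M
  constructor
  · rintro ⟨⟨t, ht, hM⟩, hMT⟩
    rw [hT] at ht hMT
    obtain ⟨l, hl, rfl⟩ := ht
    obtain ⟨m, hm, rfl⟩ := hMT
    have hc : g * !![l, 0; 0, (starRingEnd ℂ) l] = !![m, 0; 0, (starRingEnd ℂ) m] * g := by
      rw [← hM, mul_assoc, hinv', mul_one]
    rw [hgf, Matrix.mul_fin_two, Matrix.mul_fin_two] at hc
    have c0 : a * l = m * a := by simpa using congrFun (congrFun hc 0) 0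
    have c1 : b * (starRingEnd ℂ) l = m * b := by simpa using congrFun (congrFun hc 0) 1
    have e0 : l = m := mul_left_cancel₀ ha (by rw [c0, mul_comm])
    have e1 : (starRingEnd ℂ) l = m := mul_left_cancel₀ hb (by rw [c1, mul_comm])
    subst e0
    have hsq : l * l = 1 := by
      have := Complex.mul_conj' l
      rw [e1, hl] at this
      simpa using this
    rw [e1]
    rcases mul_self_eq_one_iff.1 hsq with rfl | rfl
    · left; simp [Matrix.one_fin_two]
    · right; simp [Matrix.one_fin_two]
  · rintro (rfl | rfl)
    · exact ⟨⟨1, h1T, by simpa using hinv⟩, h1T⟩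
    · exact ⟨⟨-1, hm1T, by simpa using hinv⟩, hm1T⟩
end

section
/- Let T₂ ≤ U(2) be the subgroup of diagonal unitary matrices, and let S = {λI : λ ∈ ℂ, |λ| = 1} ≤ U(2) be the subgroup of unitary scalar matrices (the center of U(2)). For every g ∈ U(2), if gT₂g⁻¹ ≠ T₂ then gT₂g⁻¹ ∩ T₂ = S. In other words, any two distinct conjugates of the diagonal maximal torus of U(2) intersect exactly in the scalar matrices. -/
/-!
If `s = g t g⁻¹` with `s`, `t` diagonal, comparing entries in `g t = s g` gives
`g i j * (t j j - s i i) = 0`. When `t 0 0 = t 1 1`, `t` is scalar and so is `s = t`. Otherwise each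
row of `g` has a vanishing entry, so the invertible matrix `g` is diagonal or antidiagonal, hence
normalizes the diagonal torus (`conj_mem_of_monomial`, applied to `g` and to `g⁻¹ = star g`),
contrary to the assumption that the two tori differ.
-/

/-- A diagonal or antidiagonal unitary matrix conjugates diagonal unitary matrices to such. -/
lemma conj_mem_of_monomial {g t : Matrix (Fin 2) (Fin 2) ℂ}
    (hg : g ∈ Matrix.unitaryGroup (Fin 2) ℂ)
    (hm : (g 0 1 = 0 ∧ g 1 0 = 0) ∨ (g 0 0 = 0 ∧ g 1 1 = 0))
    (ht : t ∈ Matrix.unitaryGroup (Fin 2) ℂ ∧ t 0 1 = 0 ∧ t 1 0 = 0) :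
    g * t * star g ∈ Matrix.unitaryGroup (Fin 2) ℂ ∧
      (g * t * star g) 0 1 = 0 ∧ (g * t * star g) 1 0 = 0 := by
  obtain ⟨htU, h01, h10⟩ := ht
  refine ⟨mul_mem (mul_mem hg htU) (Unitary.star_mem hg), ?_, ?_⟩ <;>
  rcases hm with ⟨ha, hb⟩ | ⟨ha, hb⟩ <;>
  simp [Matrix.mul_apply, Fin.sum_univ_two, Matrix.star_apply, h01, h10, ha, hb]

/-- Let `T₂ ≤ U(2)` be the subgroup of diagonal unitary matrices, and let
`S` be the subgroup of unitary scalar matrices `λ • I`, `‖λ‖ = 1` (the center of `U(2)`).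
For every `g ∈ U(2)`, if `gT₂g⁻¹ ≠ T₂` then `gT₂g⁻¹ ∩ T₂ = S`: any two distinct conjugates
of the diagonal maximal torus of `U(2)` intersect exactly in the scalar matrices. -/
theorem distinct_maximal_tori_of_U2_intersect_in_scalars
    (T₂ S : Set (Matrix (Fin 2) (Fin 2) ℂ))
    (hT₂ : T₂ = {M | M ∈ Matrix.unitaryGroup (Fin 2) ℂ ∧ M 0 1 = 0 ∧ M 1 0 = 0})
    (hS : S = {M | ∃ lam : ℂ, ‖lam‖ = 1 ∧ M = lam • (1 : Matrix (Fin 2) (Fin 2) ℂ)})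
    (g : Matrix (Fin 2) (Fin 2) ℂ)
    (hg : g ∈ Matrix.unitaryGroup (Fin 2) ℂ)
    (hne : (fun t => g * t * g⁻¹) '' T₂ ≠ T₂) :
    ((fun t => g * t * g⁻¹) '' T₂) ∩ T₂ = S := by
  subst hT₂ hS
  have hgs : star g * g = 1 := Matrix.mem_unitaryGroup_iff'.1 hg
  have hgs' : g * star g = 1 := Matrix.mem_unitaryGroup_iff.1 hg
  have hinv : g⁻¹ = star g := Matrix.inv_eq_left_inv hgs
  rw [hinv] at hne ⊢
  have hnm : ¬ ((g 0 1 = 0 ∧ g 1 0 = 0) ∨ (g 0 0 = 0 ∧ g 1 1 = 0)) := by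
    intro hm
    apply hne
    ext M
    constructor
    · rintro ⟨t, ht, rfl⟩
      exact conj_mem_of_monomial hg hm ht
    · intro hM
      refine ⟨star g * M * g, ?_, ?_⟩
      · have h := conj_mem_of_monomial (g := star g) (Unitary.star_mem hg) (by
          simpa [Matrix.star_apply, and_comm] using hm) hM
        rwa [star_star] at h
      · calc g * (star g * M * g) * star g = (g * star g) * M * (g * star g) := by
              simp only [mul_assoc]
          _ = M := by simp [hgs']
  have hdet : g 0 0 * g 1 1 - g 0 1 * g 1 0 ≠ 0 := by
    rw [← Matrix.det_fin_two]
    intro h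
    have := congrArg Matrix.det hgs
    simp [Matrix.det_mul, h] at this
  ext M
  constructor
  · rintro ⟨⟨t, ⟨htU, t01, t10⟩, rfl⟩, -, s01, s10⟩
    simp only at s01 s10
    set s := g * t * star g with hs
    have hcomm : g * t = s * g := by rw [hs, mul_assoc, hgs, mul_one]
    have e00 := congrFun (congrFun hcomm 0) 0
    have e01 := congrFun (congrFun hcomm 0) 1
    have e10 := congrFun (congrFun hcomm 1) 0
    have e11 := congrFun (congrFun hcomm 1) 1
    simp only [Matrix.mul_apply, Fin.sum_univ_two, t01, t10, s01, s10, mul_zero, zero_mul,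
      add_zero, zero_add] at e00 e01 e10 e11
    have heq : t 0 0 = t 1 1 := by
      by_contra hn
      have r0 : g 0 0 = 0 ∨ g 0 1 = 0 := by grind
      have r1 : g 1 0 = 0 ∨ g 1 1 = 0 := by grind
      grind
    have htl : t = t 0 0 • (1 : Matrix (Fin 2) (Fin 2) ℂ) := by
      ext i j
      fin_cases i <;> fin_cases j <;> simp [t01, t10, heq]
    refine ⟨t 0 0, ?_, ?_⟩
    · have h := congrFun (congrFun (Matrix.mem_unitaryGroup_iff.1 htU) 0) 0
      simp only [Matrix.mul_apply, Fin.sum_univ_two, Matrix.star_apply, t01, zero_mul, add_zero,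
        Matrix.one_apply_eq] at h
      have h2 := congrArg norm h
      rw [norm_mul, norm_star, norm_one] at h2
      nlinarith [norm_nonneg (t 0 0)]
    · change g * t * star g = t 0 0 • (1 : Matrix (Fin 2) (Fin 2) ℂ)
      generalize t 0 0 = c at htl ⊢
      rw [htl]
      simp [hgs']
  · rintro ⟨l, hl, rfl⟩
    have hmem : l • (1 : Matrix (Fin 2) (Fin 2) ℂ) ∈
        {M | M ∈ Matrix.unitaryGroup (Fin 2) ℂ ∧ M 0 1 = 0 ∧ M 1 0 = 0} := by
      refine ⟨?_, by simp, by simp⟩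
      have h : l * star l = 1 := by
        rw [← starRingEnd_apply, Complex.mul_conj']
        simp [hl]
      rw [Matrix.mem_unitaryGroup_iff, star_smul, star_one, smul_mul_smul_comm, h, one_mul,
        one_smul]
    exact ⟨⟨_, hmem, by simp [hgs']⟩, hmem⟩
end

section
/- Let R be the commutative ring ℤ[t, U, a₁, a₂, c]/(tU, ta₁, ta₂, tc, c², U², 2U, cU, a₁U). Let f : ℤ[c₁, c₂, y₁, y₂] → R be the ring homomorphism determined by c₁ ↦ 2t + a₁, c₂ ↦ t² + a₂, y₁ ↦ 2c, y₂ ↦ a₁c. Then the kernel of f is the ideal of ℤ[c₁, c₂, y₁, y₂] generated by 2y₂ − c₁y₁, y₁², y₁y₂, and y₂². -/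
/-!
Killing `t` and `U` and sending `c` to `ε` gives a ring homomorphism from the target of `f10` to
the dual numbers over `B = ℤ[a₁, a₂]`, so it suffices to bound the kernel of the composite `g`.
Let `I = (2y₂ - c₁y₁, y₁², y₁y₂, y₂²)`. The monomials of degree two in `y₁, y₂` lie in `I`, so
every polynomial is congruent modulo `I` to some `p + q y₁ + r y₂` with `p, q, r ∈ ℤ[c₁, c₂]`
(`exists_normalForm`). The value of `g` there is `p + (2q + a₁r)ε`. If it vanishes, then `p = 0`
and `2q = -a₁r`; as `2` is prime in `B` and does not divide `a₁`, this forces `r = 2s` and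
`q = -a₁s`, and the polynomial is congruent to `s(2y₂ - c₁y₁) ∈ I`.
-/

open MvPolynomial

/-- The ideal `(tU, ta₁, ta₂, tc, c², U², 2U, cU, a₁U)` of `ℤ[t, U, a₁, a₂, c]`, where the
variables are numbered `t = X 0`, `U = X 1`, `a₁ = X 2`, `a₂ = X 3`, `c = X 4`. -/
noncomputable def relIdeal10 : Ideal (MvPolynomial (Fin 5) ℤ) :=
  Ideal.span {X 0 * X 1, X 0 * X 2, X 0 * X 3, X 0 * X 4,
    X 4 ^ 2, X 1 ^ 2, 2 * X 1, X 4 * X 1, X 2 * X 1}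

/-- The ring homomorphism `f : ℤ[c₁, c₂, y₁, y₂] → ℤ[t, U, a₁, a₂, c]/relIdeal10` given by
`c₁ ↦ 2t + a₁`, `c₂ ↦ t² + a₂`, `y₁ ↦ 2c`, `y₂ ↦ a₁c`, where the source variables are
numbered `c₁ = X 0`, `c₂ = X 1`, `y₁ = X 2`, `y₂ = X 3`. -/
noncomputable def f10 :
    MvPolynomial (Fin 4) ℤ →ₐ[ℤ] (MvPolynomial (Fin 5) ℤ ⧸ relIdeal10) :=
  aeval ![Ideal.Quotient.mk relIdeal10 (2 * X 0 + X 2),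
    Ideal.Quotient.mk relIdeal10 (X 0 ^ 2 + X 3),
    Ideal.Quotient.mk relIdeal10 (2 * X 4),
    Ideal.Quotient.mk relIdeal10 (X 2 * X 4)]

namespace KerF10

/-- The ideal `(2y₂ - c₁y₁, y₁², y₁y₂, y₂²)` of `ℤ[c₁, c₂, y₁, y₂]`. -/
noncomputable def kerIdeal : Ideal (MvPolynomial (Fin 4) ℤ) :=
  Ideal.span {2 * X 3 - X 0 * X 2, X 2 ^ 2, X 2 * X 3, X 3 ^ 2}

/-- The inclusion `ℤ[c₁, c₂] → ℤ[c₁, c₂, y₁, y₂]`. -/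
noncomputable def incl : MvPolynomial (Fin 2) ℤ →ₐ[ℤ] MvPolynomial (Fin 4) ℤ :=
  aeval ![X 0, X 1]

/-- The homomorphism from `ℤ[t, U, a₁, a₂, c]` to the dual numbers over `ℤ[a₁, a₂]` with
`t, U ↦ 0` and `c ↦ ε`. -/
noncomputable def toDual :
    MvPolynomial (Fin 5) ℤ →ₐ[ℤ] DualNumber (MvPolynomial (Fin 2) ℤ) :=
  aeval ![0, 0, TrivSqZeroExt.inl (X 0), TrivSqZeroExt.inl (X 1), DualNumber.eps]

lemma toDual_relIdeal10 : ∀ x ∈ relIdeal10, toDual x = 0 := by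
  suffices h : relIdeal10 ≤ RingHom.ker toDual from fun x hx => h hx
  rw [relIdeal10, Ideal.span_le]
  rintro x (rfl | rfl | rfl | rfl | rfl | rfl | rfl | rfl | rfl) <;>
    simp [RingHom.mem_ker, toDual, pow_two]

/-- The homomorphism induced by `toDual` on the target of `f10`. -/
noncomputable def quotToDual :
    (MvPolynomial (Fin 5) ℤ ⧸ relIdeal10) →ₐ[ℤ] DualNumber (MvPolynomial (Fin 2) ℤ) :=
  Ideal.Quotient.liftₐ relIdeal10 toDual toDual_relIdeal10

/-- The composite of `f10` with `quotToDual`: `c₁ ↦ a₁`, `c₂ ↦ a₂`, `y₁ ↦ 2ε`, `y₂ ↦ a₁ε`. -/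
noncomputable def g : MvPolynomial (Fin 4) ℤ →ₐ[ℤ] DualNumber (MvPolynomial (Fin 2) ℤ) :=
  quotToDual.comp f10

lemma quotToDual_mk (x : MvPolynomial (Fin 5) ℤ) :
    quotToDual (Ideal.Quotient.mk relIdeal10 x) = toDual x := rfl

lemma g_X0 : g (X 0) = TrivSqZeroExt.inl (X 0) := by
  simp only [g, f10, AlgHom.comp_apply, aeval_X, Matrix.cons_val, quotToDual_mk]
  simp [toDual]

lemma g_X1 : g (X 1) = TrivSqZeroExt.inl (X 1) := by
  simp only [g, f10, AlgHom.comp_apply, aeval_X, Matrix.cons_val, quotToDual_mk]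
  simp [toDual]

lemma g_X2 : g (X 2) = 2 * DualNumber.eps := by
  simp only [g, f10, AlgHom.comp_apply, aeval_X, Matrix.cons_val, quotToDual_mk]
  simp [toDual]

lemma g_X3 : g (X 3) = TrivSqZeroExt.inl (X 0) * DualNumber.eps := by
  simp only [g, f10, AlgHom.comp_apply, aeval_X, Matrix.cons_val, quotToDual_mk]
  simp [toDual]

lemma g_incl (p : MvPolynomial (Fin 2) ℤ) : g (incl p) = TrivSqZeroExt.inl p := by
  have h : g.comp incl = TrivSqZeroExt.inlAlgHom ℤ _ _ := by
    apply MvPolynomial.algHom_ext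
    intro i
    fin_cases i
    · simp [incl, g_X0]
    · simp [incl, g_X1]
  exact DFunLike.congr_fun h p

lemma mem1 : 2 * X 3 - X 0 * X 2 ∈ kerIdeal := Ideal.subset_span (by simp)
lemma mem2 : X 2 ^ 2 ∈ kerIdeal := Ideal.subset_span (by simp)
lemma mem3 : X 2 * X 3 ∈ kerIdeal := Ideal.subset_span (by simp)
lemma mem4 : X 3 ^ 2 ∈ kerIdeal := Ideal.subset_span (by simp)

lemma kerIdeal_le_ker : kerIdeal ≤ RingHom.ker f10 := by
  have hmk : ∀ x ∈ ({X 0 * X 4, X 4 ^ 2} : Set (MvPolynomial (Fin 5) ℤ)),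
      Ideal.Quotient.mk relIdeal10 x = 0 := by
    rintro x (rfl | rfl) <;>
      exact Ideal.Quotient.eq_zero_iff_mem.2 (Ideal.subset_span (by simp))
  have htc := hmk (X 0 * X 4) (by simp)
  have hcc := hmk (X 4 ^ 2) (by simp)
  rw [map_mul] at htc
  rw [map_pow] at hcc
  rw [kerIdeal, Ideal.span_le]
  rintro x (rfl | rfl | rfl | rfl) <;>
    simp only [SetLike.mem_coe, RingHom.mem_ker, f10, map_sub, map_mul, map_pow, aeval_X,
      Matrix.cons_val, map_add, map_ofNat]
  · linear_combination (-4) * htc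
  · linear_combination 4 * hcc
  · linear_combination 2 * Ideal.Quotient.mk relIdeal10 (X 2) * hcc
  · linear_combination Ideal.Quotient.mk relIdeal10 (X 2) ^ 2 * hcc

/-- Modulo `kerIdeal`, every polynomial is of degree at most one in `y₁, y₂`. -/
lemma exists_normalForm (P : MvPolynomial (Fin 4) ℤ) :
    ∃ p q r, P - (incl p + incl q * X 2 + incl r * X 3) ∈ kerIdeal := by
  induction P using MvPolynomial.induction_on with
  | C a => exact ⟨C a, 0, 0, by simp [incl]⟩
  | add P Q hP hQ =>
    obtain ⟨p, q, r, h⟩ := hP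
    obtain ⟨p', q', r', h'⟩ := hQ
    refine ⟨p + p', q + q', r + r', ?_⟩
    convert kerIdeal.add_mem h h' using 1
    simp only [map_add]
    ring
  | mul_X P i hP =>
    obtain ⟨p, q, r, h⟩ := hP
    have hX := kerIdeal.mul_mem_right (X i) h
    fin_cases i
    · refine ⟨p * X 0, q * X 0, r * X 0, ?_⟩
      convert hX using 1
      simp [incl]
      ring
    · refine ⟨p * X 1, q * X 1, r * X 1, ?_⟩
      convert hX using 1
      simp [incl]
      ring
    · refine ⟨0, p, 0, ?_⟩
      convert kerIdeal.add_mem hX (kerIdeal.add_mem (kerIdeal.mul_mem_left (incl q) mem2)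
        (kerIdeal.mul_mem_left (incl r) mem3)) using 1
      simp
      ring
    · refine ⟨0, 0, p, ?_⟩
      convert kerIdeal.add_mem hX (kerIdeal.add_mem (kerIdeal.mul_mem_left (incl q) mem3)
        (kerIdeal.mul_mem_left (incl r) mem4)) using 1
      simp
      ring

/-- The syzygies of `(2, a₁)` over `ℤ[a₁, a₂]` are the multiples of `(-a₁, 2)`. -/
lemma syzygy {q r : MvPolynomial (Fin 2) ℤ} (h : 2 * q + X 0 * r = 0) :
    ∃ s, r = 2 * s ∧ q = -(X 0 * s) := by
  have h2 : (2 : MvPolynomial (Fin 2) ℤ) = C 2 := by simp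
  have hp : Prime (2 : MvPolynomial (Fin 2) ℤ) := by
    rw [h2, MvPolynomial.prime_C_iff]
    exact Int.prime_two
  have hX : ¬ (2 : MvPolynomial (Fin 2) ℤ) ∣ X 0 := by
    rw [h2, MvPolynomial.C_dvd_iff_dvd_coeff]
    intro hd
    have := hd (Finsupp.single 0 1)
    rw [MvPolynomial.coeff_X] at this
    norm_num at this
  have hd : (2 : MvPolynomial (Fin 2) ℤ) ∣ X 0 * r := ⟨-q, by linear_combination h⟩
  obtain ⟨s, rfl⟩ := (hp.dvd_or_dvd hd).resolve_left hX
  refine ⟨s, rfl, mul_left_cancel₀ hp.ne_zero ?_⟩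
  linear_combination h

lemma ker_le_kerIdeal : RingHom.ker f10 ≤ kerIdeal := by
  intro P hP
  obtain ⟨p, q, r, h⟩ := exists_normalForm P
  have hgP : g P = 0 := by
    rw [g, AlgHom.comp_apply, (RingHom.mem_ker).1 hP, map_zero]
  have hgI : g (P - (incl p + incl q * X 2 + incl r * X 3)) = 0 := by
    rw [g, AlgHom.comp_apply, (RingHom.mem_ker).1 (kerIdeal_le_ker h), map_zero]
  rw [map_sub, hgP, zero_sub, neg_eq_zero] at hgI
  simp only [map_add, map_mul, g_incl, g_X2, g_X3] at hgI
  have h1 := congrArg TrivSqZeroExt.fst hgI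
  have h2 := congrArg TrivSqZeroExt.snd hgI
  have hfst : TrivSqZeroExt.fst (2 : DualNumber (MvPolynomial (Fin 2) ℤ)) = 2 :=
    map_ofNat (TrivSqZeroExt.fstHom ℤ (MvPolynomial (Fin 2) ℤ) (MvPolynomial (Fin 2) ℤ)) 2
  simp [hfst] at h1 h2
  obtain ⟨s, rfl, rfl⟩ := syzygy (q := q) (r := r) (by linear_combination h2)
  subst h1
  convert kerIdeal.add_mem h (kerIdeal.mul_mem_left (incl s) mem1) using 1
  simp only [incl, map_zero, map_neg, map_mul, map_ofNat, aeval_X, Matrix.cons_val]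
  ring

end KerF10

/-- The kernel of `f10` is the ideal `(2y₂ - c₁y₁, y₁², y₁y₂, y₂²)`. -/
theorem ker_f10 :
    RingHom.ker f10 =
      Ideal.span {2 * X 3 - X 0 * X 2, X 2 ^ 2, X 2 * X 3, X 3 ^ 2} :=
  le_antisymm KerF10.ker_le_kerIdeal KerF10.kerIdeal_le_ker
end

section
/- Let S be the commutative ring ℤ[a, t, w₁, w₂, x, q]/(at, aw₁, aw₂, ax, aq, 2w₁, 2w₂, 2x, 2q, t², tw₁, tx, x², w₂² + qw₁). Let f : ℤ[W₁, W₂, p₁, r, b₁, b₂, b₃] → S be the ring homomorphism determined by W₁ ↦ w₁, W₂ ↦ w₂, p₁ ↦ a² + q, r ↦ 2a, b₁ ↦ tw₂, b₂ ↦ xw₁, b₃ ↦ xw₂. Then the kernel of f is the ideal of ℤ[W₁, W₂, p₁, r, b₁, b₂, b₃] generated by the elements W₂² − p₁W₁, r² − 4p₁, b₂p₁ − b₃W₂, b₂W₂ − b₃W₁, 2W₁, 2W₂, rW₁, rW₂, b₁W₁, b₁W₂, 2b₁, 2b₂, 2b₃, rb₁, rb₂, rb₃, and bᵢbⱼ for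 all 1 ≤ i ≤ j ≤ 3. -/
/-!
The inclusion of the listed ideal `J11` in the kernel is a check on generators. For the converse,
the relations in `J11` show that modulo `J11` every polynomial is a combination of
`1, W₂, r, b₁, b₂, b₃, b₃W₂` with coefficients in `ℤ[W₁, p₁]` (`exists_rep`). If such a combination
is killed by `f11`, its coefficients are read off by mapping `S` to three explicit rings, each an
iterated free quadratic extension of a polynomial ring:

* over `ℤ[p₁]`, with `a = √p₁` and the other variables sent to `0` (`detect_a`);
* over `𝔽₂[w₁, q]`, with `w₂ = √(qw₁)`, `x² = 0`, `a = t = 0` (`detect_wx`);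
* over `𝔽₂[q]`, with `w₂² = t² = 0`, `a = w₁ = x = 0` (`detect_t`).

The resulting constraints (divisibility of coefficients by `2` or by `W₁`, and the coefficient of
`b₂` being `-p₁` times that of `b₃W₂` modulo `2`) say exactly that the combination lies in `J11`
(`rep_mem`). Thus the representation need not be unique, and no normal form is needed.
-/

open MvPolynomial

/-- The ideal `(at, aw₁, aw₂, ax, aq, 2w₁, 2w₂, 2x, 2q, t², tw₁, tx, x², w₂² + qw₁)` of
`ℤ[a, t, w₁, w₂, x, q]`, where the variables are numbered `a = X 0`, `t = X 1`, `w₁ = X 2`,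
`w₂ = X 3`, `x = X 4`, `q = X 5`. -/
noncomputable def relIdeal11 : Ideal (MvPolynomial (Fin 6) ℤ) :=
  Ideal.span {X 0 * X 1, X 0 * X 2, X 0 * X 3, X 0 * X 4, X 0 * X 5,
    2 * X 2, 2 * X 3, 2 * X 4, 2 * X 5,
    X 1 ^ 2, X 1 * X 2, X 1 * X 4, X 4 ^ 2, X 3 ^ 2 + X 5 * X 2}

/-- The ring homomorphism `f : ℤ[W₁, W₂, p₁, r, b₁, b₂, b₃] → ℤ[a, t, w₁, w₂, x, q]/relIdeal11`
given by `W₁ ↦ w₁`, `W₂ ↦ w₂`, `p₁ ↦ a² + q`, `r ↦ 2a`, `b₁ ↦ tw₂`, `b₂ ↦ xw₁`, `b₃ ↦ xw₂`,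
where the source variables are numbered `W₁ = X 0`, `W₂ = X 1`, `p₁ = X 2`, `r = X 3`,
`b₁ = X 4`, `b₂ = X 5`, `b₃ = X 6`. -/
noncomputable def f11 :
    MvPolynomial (Fin 7) ℤ →ₐ[ℤ] (MvPolynomial (Fin 6) ℤ ⧸ relIdeal11) :=
  aeval ![Ideal.Quotient.mk relIdeal11 (X 2),
    Ideal.Quotient.mk relIdeal11 (X 3),
    Ideal.Quotient.mk relIdeal11 (X 0 ^ 2 + X 5),
    Ideal.Quotient.mk relIdeal11 (2 * X 0),
    Ideal.Quotient.mk relIdeal11 (X 1 * X 3),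
    Ideal.Quotient.mk relIdeal11 (X 4 * X 2),
    Ideal.Quotient.mk relIdeal11 (X 4 * X 3)]


/-! ### Generation modulo the relations -/

/-- The coefficient ring `ℤ[W₁, p₁]`. -/
noncomputable abbrev K := MvPolynomial (Fin 2) ℤ

/-- The ring `𝔽₂[w₁, q]`. -/
noncomputable abbrev K2 := MvPolynomial (Fin 2) (ZMod 2)

/-- The inclusion `ℤ[W₁, p₁] → ℤ[W₁, W₂, p₁, r, b₁, b₂, b₃]`. -/
noncomputable def inc : K →+* MvPolynomial (Fin 7) ℤ := (aeval ![X 0, X 2] : K →ₐ[ℤ] _).toRingHom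

/-- The reduction `ℤ[W₁, p₁] → 𝔽₂[w₁, q]`. -/
noncomputable def red : K →+* K2 := map (Int.castRingHom (ZMod 2))

/-- The endomorphism of `ℤ[W₁, p₁]` setting `W₁` to `0`. -/
noncomputable def zer : K →+* K := (aeval ![0, X 1] : K →ₐ[ℤ] _).toRingHom

/-- The ideal of relations whose equality with the kernel is claimed. -/
noncomputable def J11 : Ideal (MvPolynomial (Fin 7) ℤ) :=
  Ideal.span {X 1 ^ 2 - X 2 * X 0, X 3 ^ 2 - 4 * X 2,
        X 5 * X 2 - X 6 * X 1, X 5 * X 1 - X 6 * X 0,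
        2 * X 0, 2 * X 1, X 3 * X 0, X 3 * X 1, X 4 * X 0, X 4 * X 1,
        2 * X 4, 2 * X 5, 2 * X 6, X 3 * X 4, X 3 * X 5, X 3 * X 6,
        X 4 ^ 2, X 4 * X 5, X 4 * X 6, X 5 ^ 2, X 5 * X 6, X 6 ^ 2}

lemma inc_X0 : inc (X 0) = X 0 := by simp [inc]
lemma inc_X1 : inc (X 1) = X 2 := by simp [inc]

/-- The combination of `1, W₂, r, b₁, b₂, b₃, b₃W₂` with the given coefficients
in `ℤ[W₁, p₁]`. -/
noncomputable def rep (A D B E F G H : K) : MvPolynomial (Fin 7) ℤ :=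
  inc A + X 1 * inc D + X 3 * inc B + X 4 * inc E + X 5 * inc F + X 6 * inc G + X 6 * X 1 * inc H

lemma J11_gens :
    X 1 ^ 2 - X 2 * X 0 ∈ J11 ∧ X 3 ^ 2 - 4 * X 2 ∈ J11 ∧
    X 5 * X 2 - X 6 * X 1 ∈ J11 ∧ X 5 * X 1 - X 6 * X 0 ∈ J11 ∧
    2 * X 0 ∈ J11 ∧ 2 * X 1 ∈ J11 ∧ X 3 * X 0 ∈ J11 ∧ X 3 * X 1 ∈ J11 ∧
    X 4 * X 0 ∈ J11 ∧ X 4 * X 1 ∈ J11 ∧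
    2 * X 4 ∈ J11 ∧ 2 * X 5 ∈ J11 ∧ 2 * X 6 ∈ J11 ∧ X 3 * X 4 ∈ J11 ∧
    X 3 * X 5 ∈ J11 ∧ X 3 * X 6 ∈ J11 ∧
    X 4 ^ 2 ∈ J11 ∧ X 4 * X 5 ∈ J11 ∧ X 4 * X 6 ∈ J11 ∧ X 5 ^ 2 ∈ J11 ∧
    X 5 * X 6 ∈ J11 ∧ X 6 ^ 2 ∈ J11 := by
  have h : ∀ y ∈ ({X 1 ^ 2 - X 2 * X 0, X 3 ^ 2 - 4 * X 2,
        X 5 * X 2 - X 6 * X 1, X 5 * X 1 - X 6 * X 0,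
        2 * X 0, 2 * X 1, X 3 * X 0, X 3 * X 1, X 4 * X 0, X 4 * X 1,
        2 * X 4, 2 * X 5, 2 * X 6, X 3 * X 4, X 3 * X 5, X 3 * X 6,
        X 4 ^ 2, X 4 * X 5, X 4 * X 6, X 5 ^ 2, X 5 * X 6, X 6 ^ 2} :
        Set (MvPolynomial (Fin 7) ℤ)), y ∈ J11 := fun y hy => Ideal.subset_span hy
  simpa only [Set.mem_insert_iff, Set.mem_singleton_iff, forall_eq_or_imp, forall_eq] using h

set_option linter.unusedSimpArgs false in
/-- Modulo `J11`, the elements `1, W₂, r, b₁, b₂, b₃, b₃W₂` generate everything as a module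
over `ℤ[W₁, p₁]`: their span contains `1` and is stable under multiplication by each variable. -/
lemma exists_rep (p : MvPolynomial (Fin 7) ℤ) :
    ∃ A D B E F G H : K, Ideal.Quotient.mk J11 p = Ideal.Quotient.mk J11 (rep A D B E F G H) := by
  obtain ⟨h1, h2, h3, h4, -, -, h7, h8, h9, h10, -, -, -, h14, h15, h16,
    h17, h18, h19, h20, h21, h22⟩ := J11_gens
  simp only [← Ideal.Quotient.eq_zero_iff_mem, map_sub, map_mul, map_pow, map_ofNat]
    at h1 h2 h3 h4 h7 h8 h9 h10 h14 h15 h16 h17 h18 h19 h20 h21 h22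
  induction p using MvPolynomial.induction_on with
  | C n =>
    refine ⟨C n, 0, 0, 0, 0, 0, 0, ?_⟩
    simp [rep, inc]
  | add p q hp hq =>
    obtain ⟨A, D, B, E, F, G, H, h⟩ := hp
    obtain ⟨A', D', B', E', F', G', H', h'⟩ := hq
    refine ⟨A + A', D + D', B + B', E + E', F + F', G + G', H + H', ?_⟩
    rw [map_add, h, h', ← map_add]
    congr 1
    simp only [rep, map_add]
    ring
  | mul_X p i hp =>
    obtain ⟨A, D, B, E, F, G, H, h⟩ := hp
    rw [map_mul, h]
    simp only [rep, map_add, map_mul]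
    generalize hW1 : Ideal.Quotient.mk J11 (X 0) = W1 at *
    generalize hW2 : Ideal.Quotient.mk J11 (X 1) = W2 at *
    generalize hp1 : Ideal.Quotient.mk J11 (X 2) = p1 at *
    generalize hr : Ideal.Quotient.mk J11 (X 3) = r at *
    generalize hb1 : Ideal.Quotient.mk J11 (X 4) = b1 at *
    generalize hb2 : Ideal.Quotient.mk J11 (X 5) = b2 at *
    generalize hb3 : Ideal.Quotient.mk J11 (X 6) = b3 at *
    set a := Ideal.Quotient.mk J11 (inc A) with ha
    set d := Ideal.Quotient.mk J11 (inc D) with hd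
    set b := Ideal.Quotient.mk J11 (inc B) with hb
    set e := Ideal.Quotient.mk J11 (inc E) with he
    set f := Ideal.Quotient.mk J11 (inc F) with hf
    set g := Ideal.Quotient.mk J11 (inc G) with hg
    set k := Ideal.Quotient.mk J11 (inc H) with hk
    fin_cases i
    · refine ⟨X 0 * A, X 0 * D, X 0 * B, X 0 * E, X 0 * F, X 0 * G, X 0 * H, ?_⟩
      simp only [map_mul, inc_X0, hW1, ← ha, ← hd, ← hb, ← he, ← hf, ← hg, ← hk,
        Fin.zero_eta]
      ring
    · refine ⟨X 1 * X 0 * D, A, 0, 0, 0, X 0 * F + X 1 * X 0 * H, G, ?_⟩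
      simp only [map_mul, map_add, map_zero, inc_X0, inc_X1, hW1, hW2, hp1, ← ha, ← hd, ← hb,
        ← he, ← hf, ← hg, ← hk, Fin.mk_one]
      linear_combination d * h1 + b * h8 + e * h10 + f * h4 + b3 * k * h1
    · refine ⟨X 1 * A, X 1 * D, X 1 * B, X 1 * E, X 1 * F, X 1 * G, X 1 * H, ?_⟩
      simp only [map_mul, inc_X1, hp1, ← ha, ← hd, ← hb, ← he, ← hf, ← hg, ← hk,
        Fin.reduceFinMk]
      ring
    · refine ⟨4 * X 1 * B, 0, A, 0, 0, 0, 0, ?_⟩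
      simp only [map_mul, map_zero, map_ofNat, inc_X1, hp1, hr, ← ha, ← hd, ← hb, ← he, ← hf,
        ← hg, ← hk, Fin.reduceFinMk]
      linear_combination d * h8 + b * h2 + e * h14 + f * h15 + g * h16 + k * W2 * h16
    · refine ⟨0, 0, 0, A, 0, 0, 0, ?_⟩
      simp only [map_mul, map_zero, hb1, ← ha, ← hd, ← hb, ← he, ← hf,
        ← hg, ← hk, Fin.reduceFinMk]
      linear_combination d * h10 + b * h14 + e * h17 + f * h18 + g * h19 + k * W2 * h19
    · refine ⟨0, 0, 0, 0, A, X 0 * D, 0, ?_⟩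
      simp only [map_mul, map_zero, inc_X0, hW1, hb2, ← ha, ← hd, ← hb, ← he, ← hf,
        ← hg, ← hk, Fin.reduceFinMk]
      linear_combination d * h4 + b * h15 + e * h18 + f * h20 + g * h21 + k * W2 * h21
    · refine ⟨0, 0, 0, 0, 0, A, D, ?_⟩
      simp only [map_mul, map_zero, hb3, ← ha, ← hd, ← hb, ← he, ← hf,
        ← hg, ← hk, Fin.reduceFinMk]
      linear_combination b * h16 + e * h19 + f * h21 + g * h22 + k * W2 * h22

/-! ### The relations hold in `S` -/

lemma J11_le_ker : J11 ≤ RingHom.ker f11 := by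
  have hS : ∀ y ∈ ({X 0 * X 1, X 0 * X 2, X 0 * X 3, X 0 * X 4, X 0 * X 5,
      2 * X 2, 2 * X 3, 2 * X 4, 2 * X 5,
      X 1 ^ 2, X 1 * X 2, X 1 * X 4, X 4 ^ 2, X 3 ^ 2 + X 5 * X 2} :
      Set (MvPolynomial (Fin 6) ℤ)), Ideal.Quotient.mk relIdeal11 y = 0 := fun y hy =>
    Ideal.Quotient.eq_zero_iff_mem.2 (Ideal.subset_span hy)
  simp only [Set.mem_insert_iff, Set.mem_singleton_iff, forall_eq_or_imp, forall_eq, map_mul,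
    map_pow, map_add, map_ofNat] at hS
  obtain ⟨h1, h2, h3, h4, h5, h6, h7, h8, h9, h10, h11, h12, h13, h14⟩ := hS
  rw [J11, Ideal.span_le]
  intro y hy
  rw [SetLike.mem_coe, RingHom.mem_ker]
  simp only [Set.mem_insert_iff, Set.mem_singleton_iff] at hy
  generalize ha : Ideal.Quotient.mk relIdeal11 (X 0) = a at *
  generalize ht : Ideal.Quotient.mk relIdeal11 (X 1) = t at *
  generalize hw1 : Ideal.Quotient.mk relIdeal11 (X 2) = w1 at *
  generalize hw2 : Ideal.Quotient.mk relIdeal11 (X 3) = w2 at *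
  generalize hx : Ideal.Quotient.mk relIdeal11 (X 4) = x at *
  generalize hq : Ideal.Quotient.mk relIdeal11 (X 5) = q at *
  have e0 : f11 (X 0) = w1 := by simp [f11, hw1]
  have e1 : f11 (X 1) = w2 := by simp [f11, hw2]
  have e2 : f11 (X 2) = a ^ 2 + q := by simp [f11, ha, hq]
  have e3 : f11 (X 3) = 2 * a := by
    simp only [f11, aeval_X, map_mul, ← ha]
    simp [map_ofNat]
  have e4 : f11 (X 4) = t * w2 := by simp [f11, ht, hw2]
  have e5 : f11 (X 5) = x * w1 := by simp [f11, hx, hw1]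
  have e6 : f11 (X 6) = x * w2 := by simp [f11, hx, hw2]
  rcases hy with rfl | rfl | rfl | rfl | rfl | rfl | rfl | rfl | rfl | rfl | rfl | rfl | rfl |
    rfl | rfl | rfl | rfl | rfl | rfl | rfl | rfl | rfl <;>
  simp only [map_sub, map_mul, map_pow, map_ofNat, e0, e1, e2, e3, e4, e5, e6]
  · linear_combination h14 - a * h2 - q * h6
  · linear_combination -2 * h9
  · linear_combination a * w1 * h4 - x * h14 + q * x * h6
  · ring
  · exact h6
  · exact h7
  · linear_combination 2 * h2
  · linear_combination 2 * h3
  · linear_combination w2 * h11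
  · linear_combination t * h14 - q * h11
  · linear_combination t * h7
  · linear_combination x * h6
  · linear_combination x * h7
  · linear_combination 2 * w2 * h1
  · linear_combination 2 * w1 * h4
  · linear_combination 2 * w2 * h4
  · linear_combination w2 ^ 2 * h10
  · linear_combination w1 * w2 * h12
  · linear_combination w2 ^ 2 * h12
  · linear_combination w1 ^ 2 * h13
  · linear_combination w1 * w2 * h13
  · linear_combination w2 ^ 2 * h13

/-! ### Detection of the coefficients -/

lemma X0_dvd_sub_zer (A : K) : X 0 ∣ A - zer A := by
  induction A using MvPolynomial.induction_on with
  | C n => simp [zer]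
  | add p q hp hq =>
    rw [map_add, add_sub_add_comm]
    exact dvd_add hp hq
  | mul_X p i hp =>
    rw [map_mul]
    fin_cases i
    · simp [zer]
    · have : zer (X 1) = X 1 := by simp [zer]
      simp only [Fin.mk_one, this, ← sub_mul]
      exact hp.mul_right _

lemma two_dvd_of_red (A : K) (h : red A = 0) : 2 ∣ A := by
  have := (MvPolynomial.C_dvd_iff_zmod 2 A).2 h
  simpa using this

/-- Six elements of `T` satisfying the relations of `S` define a homomorphism `S → T`; `g` is its
composite with `f11`, so it kills the kernel of `f11`. -/
lemma exists_hom {T : Type*} [CommRing T] (a t w1 w2 x q : T)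
    (h1 : a * t = 0) (h2 : a * w1 = 0) (h3 : a * w2 = 0) (h4 : a * x = 0) (h5 : a * q = 0)
    (h6 : 2 * w1 = 0) (h7 : 2 * w2 = 0) (h8 : 2 * x = 0) (h9 : 2 * q = 0)
    (h10 : t ^ 2 = 0) (h11 : t * w1 = 0) (h12 : t * x = 0) (h13 : x ^ 2 = 0)
    (h14 : w2 ^ 2 + q * w1 = 0) :
    ∃ g : MvPolynomial (Fin 7) ℤ →+* T, (∀ p, f11 p = 0 → g p = 0) ∧
      g (X 0) = w1 ∧ g (X 1) = w2 ∧ g (X 2) = a ^ 2 + q ∧ g (X 3) = 2 * a ∧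
      g (X 4) = t * w2 ∧ g (X 5) = x * w1 ∧ g (X 6) = x * w2 := by
  let ψ : MvPolynomial (Fin 6) ℤ →+* T := eval₂Hom (Int.castRingHom T) ![a, t, w1, w2, x, q]
  have hψ : ∀ y ∈ relIdeal11, ψ y = 0 := by
    intro y hy
    have : relIdeal11 ≤ RingHom.ker ψ := by
      rw [relIdeal11, Ideal.span_le]
      intro y hy
      rw [SetLike.mem_coe, RingHom.mem_ker]
      simp only [Set.mem_insert_iff, Set.mem_singleton_iff] at hy
      rcases hy with rfl | rfl | rfl | rfl | rfl | rfl | rfl | rfl | rfl | rfl | rfl | rfl |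
        rfl | rfl <;>
      simpa [ψ]
    exact this hy
  refine ⟨(Ideal.Quotient.lift relIdeal11 ψ hψ).comp f11.toRingHom, ?_, ?_, ?_, ?_, ?_, ?_, ?_, ?_⟩
  · intro p hp
    simp [hp]
  all_goals simp [f11, ψ]

/-- A homomorphism agreeing on `W₁` and `p₁` with a homomorphism `φ` from `ℤ[W₁, p₁]` restricts
to `φ` on the coefficients. -/
lemma hom_inc {T : Type*} [CommRing T] (g : MvPolynomial (Fin 7) ℤ →+* T) (φ : K →+* T)
    (h0 : g (X 0) = φ (X 0)) (h1 : g (X 2) = φ (X 1)) (A : K) : g (inc A) = φ A := by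
  have : g.comp inc = φ := by
    refine MvPolynomial.ringHom_ext (fun n => by simp) (fun i => ?_)
    fin_cases i
    · simpa [inc_X0] using h0
    · simpa [inc_X1] using h1
  exact RingHom.congr_fun this A

lemma two_eq_zero_K2 : (2 : K2) = 0 := by
  simpa using CharP.cast_eq_zero K2 2

open QuadraticAlgebra in
/-- Sending `a` to a square root of `p₁` over `ℤ[p₁]` and all other variables of `S` to `0`
detects the coefficients of `1` and `r`. -/
lemma detect_a (A D B E F G H : K) (h : f11 (rep A D B E F G H) = 0) :
    zer A = 0 ∧ zer B = 0 := by
  obtain ⟨g, hg, g0, g1, g2, g3, g4, g5, g6⟩ := exists_hom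
    (⟨0, 1⟩ : QuadraticAlgebra K (X 1) 0) 0 0 0 0 0
    (by simp) (by simp) (by simp) (by simp) (by simp) (by simp) (by simp) (by simp) (by simp)
    (by simp) (by simp) (by simp) (by simp) (by simp)
  have key := hg _ h
  have hi := hom_inc g ((algebraMap K (QuadraticAlgebra K (X 1) 0)).comp zer)
    (by rw [g0]; ext <;> simp [zer]) (by rw [g2]; ext <;> simp [zer, sq])
  simp only [rep, map_add, map_mul, hi, g1, g3, g4, g5, g6] at key
  have hre := congrArg QuadraticAlgebra.re key
  have him := congrArg QuadraticAlgebra.im key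
  simp at hre him
  exact ⟨hre, him⟩

open QuadraticAlgebra in
/-- Adjoining to `𝔽₂[w₁, q]` a square root `w₂` of `qw₁` and an `x` with `x² = 0`, and killing
`a` and `t`, detects the coefficients of `1`, `W₂`, `b₃`, and the combination of those of `b₂`
and `b₃W₂`. -/
lemma detect_wx (A D B E F G H : K) (h : f11 (rep A D B E F G H) = 0) :
    red A = 0 ∧ red D = 0 ∧ red G = 0 ∧ red (F + X 1 * H) = 0 := by
  obtain ⟨g, hg, g0, g1, g2, g3, g4, g5, g6⟩ := exists_hom
    (T := QuadraticAlgebra (QuadraticAlgebra K2 (X 1 * X 0) 0) 0 0)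
    0 0 ⟨⟨X 0, 0⟩, 0⟩ ⟨⟨0, 1⟩, 0⟩ ⟨0, 1⟩ ⟨⟨X 1, 0⟩, 0⟩
    (by simp) (by simp) (by simp) (by simp) (by simp)
    (by ext <;> simp [two_eq_zero_K2]) (by ext <;> simp [two_eq_zero_K2])
    (by ext <;> simp [two_eq_zero_K2]) (by ext <;> simp [two_eq_zero_K2])
    (by simp) (by simp) (by simp) (by ext <;> simp [sq])
    (by ext <;> simp [sq, ← two_mul, two_eq_zero_K2])
  have key := hg _ h
  have hi := hom_inc g ((algebraMap (QuadraticAlgebra K2 (X 1 * X 0) 0)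
      (QuadraticAlgebra (QuadraticAlgebra K2 (X 1 * X 0) 0) 0 0)).comp
      ((algebraMap K2 (QuadraticAlgebra K2 (X 1 * X 0) 0)).comp red))
    (by rw [g0]; ext <;> simp [red]) (by rw [g2]; ext <;> simp [red])
  simp only [rep, map_add, map_mul, hi, g1, g3, g4, g5, g6] at key
  have k1 := congrArg (fun z => z.re.re) key
  have k2 := congrArg (fun z => z.re.im) key
  have k3 := congrArg (fun z => z.im.re) key
  have k4 := congrArg (fun z => z.im.im) key
  simp at k1 k2 k3 k4
  refine ⟨k1, k2, k4, ?_⟩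
  have k5 : (X 0 : K2) * red (F + X 1 * H) = 0 := by
    have : red (X 1) = X 1 := by simp [red]
    rw [map_add, map_mul, this]
    linear_combination k3
  exact (mul_eq_zero.1 k5).resolve_left (X_ne_zero _)

open QuadraticAlgebra in
/-- Adjoining to `𝔽₂[q]` two elements `w₂`, `t` of square zero, and killing `a`, `w₁` and `x`,
detects the coefficient of `b₁` modulo `W₁`. -/
lemma detect_t (A D B E F G H : K) (h : f11 (rep A D B E F G H) = 0) :
    red (zer E) = 0 := by
  -- The subring `𝔽₂[q]` is encoded inside `𝔽₂[w₁, q]` by letting the image of `w₁` be `0`.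
  obtain ⟨g, hg, g0, g1, g2, g3, g4, g5, g6⟩ := exists_hom
    (T := QuadraticAlgebra (QuadraticAlgebra K2 0 0) 0 0)
    0 ⟨0, 1⟩ 0 ⟨⟨0, 1⟩, 0⟩ 0 ⟨⟨X 1, 0⟩, 0⟩
    (by simp) (by simp) (by simp) (by simp) (by simp)
    (by simp) (by ext <;> simp [two_eq_zero_K2])
    (by simp) (by ext <;> simp [two_eq_zero_K2])
    (by ext <;> simp [sq]) (by simp) (by simp) (by simp) (by ext <;> simp [sq])
  have key := hg _ h
  have hi := hom_inc g ((algebraMap (QuadraticAlgebra K2 0 0)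
      (QuadraticAlgebra (QuadraticAlgebra K2 0 0) 0 0)).comp
      ((algebraMap K2 (QuadraticAlgebra K2 0 0)).comp (red.comp zer)))
    (by rw [g0]; ext <;> simp [red, zer]) (by rw [g2]; ext <;> simp [red, zer])
  simp only [rep, map_add, map_mul, hi, g1, g3, g4, g5, g6] at key
  have k4 := congrArg (fun z => z.im.im) key
  simpa using k4

/-! ### The kernel -/

/-- The coefficients of an element in the kernel are so constrained by the three detecting
homomorphisms that every term lies in `J11`. -/
lemma rep_mem (A D B E F G H : K) (h : f11 (rep A D B E F G H) = 0) :
    rep A D B E F G H ∈ J11 := by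
  obtain ⟨hA, hB⟩ := detect_a A D B E F G H h
  obtain ⟨hA2, hD, hG, hF⟩ := detect_wx A D B E F G H h
  have hE := detect_t A D B E F G H h
  obtain ⟨A1, hA1⟩ := X0_dvd_sub_zer A
  rw [hA, sub_zero] at hA1
  obtain ⟨A2, rfl⟩ : 2 ∣ A1 := by
    refine two_dvd_of_red A1 ?_
    rw [hA1, map_mul, show red (X 0) = X 0 by simp [red]] at hA2
    exact (mul_eq_zero.1 hA2).resolve_left (X_ne_zero _)
  obtain ⟨B1, hB1⟩ := X0_dvd_sub_zer B
  rw [hB, sub_zero] at hB1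
  obtain ⟨D1, hD1⟩ := two_dvd_of_red _ hD
  obtain ⟨G1, hG1⟩ := two_dvd_of_red _ hG
  obtain ⟨E1, hE1⟩ := X0_dvd_sub_zer E
  obtain ⟨E2, hE2⟩ := two_dvd_of_red _ hE
  obtain ⟨F1, hF1⟩ := two_dvd_of_red _ hF
  rw [hE2, sub_eq_iff_eq_add] at hE1
  rw [← eq_sub_iff_add_eq] at hF1
  obtain ⟨-, -, h3, -, h5, h6, h7, -, h9, -, h11, h12, h13, -⟩ := J11_gens
  simp only [← Ideal.Quotient.eq_zero_iff_mem, map_sub, map_mul, map_ofNat]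
    at h3 h5 h6 h7 h9 h11 h12 h13 ⊢
  rw [rep, hA1, hB1, hD1, hG1, hE1, hF1]
  simp only [map_add, map_sub, map_mul, map_ofNat, inc_X0, inc_X1]
  generalize Ideal.Quotient.mk J11 (inc A2) = a
  generalize Ideal.Quotient.mk J11 (inc B1) = b
  generalize Ideal.Quotient.mk J11 (inc D1) = d
  generalize Ideal.Quotient.mk J11 (inc G1) = g
  generalize Ideal.Quotient.mk J11 (inc E1) = e
  generalize Ideal.Quotient.mk J11 (inc E2) = e'
  generalize Ideal.Quotient.mk J11 (inc F1) = f
  generalize Ideal.Quotient.mk J11 (inc H) = k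
  linear_combination a * h5 + d * h6 + b * h7 + e * h9 + e' * h11 + f * h12 - k * h3 + g * h13

/-- The kernel of `f11` is the ideal generated by `W₂² - p₁W₁`,
`r² - 4p₁`, `b₂p₁ - b₃W₂`, `b₂W₂ - b₃W₁`, `2W₁`, `2W₂`, `rW₁`, `rW₂`, `b₁W₁`, `b₁W₂`,
`2b₁`, `2b₂`, `2b₃`, `rb₁`, `rb₂`, `rb₃`, and `bᵢbⱼ` for `1 ≤ i ≤ j ≤ 3`. -/
theorem ker_f11 :
    RingHom.ker f11 =
      Ideal.span {X 1 ^ 2 - X 2 * X 0, X 3 ^ 2 - 4 * X 2,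
        X 5 * X 2 - X 6 * X 1, X 5 * X 1 - X 6 * X 0,
        2 * X 0, 2 * X 1, X 3 * X 0, X 3 * X 1, X 4 * X 0, X 4 * X 1,
        2 * X 4, 2 * X 5, 2 * X 6, X 3 * X 4, X 3 * X 5, X 3 * X 6,
        X 4 ^ 2, X 4 * X 5, X 4 * X 6, X 5 ^ 2, X 5 * X 6, X 6 ^ 2} := by
  refine le_antisymm (fun p hp => ?_) J11_le_ker
  change p ∈ J11
  obtain ⟨A, D, B, E, F, G, H, h⟩ := exists_rep p
  have hsub : p - rep A D B E F G H ∈ J11 := Ideal.Quotient.eq.1 h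
  have h0 : f11 (p - rep A D B E F G H) = 0 := J11_le_ker hsub
  have hp0 : f11 p = 0 := hp
  rw [map_sub, hp0, zero_sub, neg_eq_zero] at h0
  simpa using J11.add_mem hsub (rep_mem A D B E F G H h0)
end
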